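/- Let P be a partially ordered set with a greatest element ⊤ and let a ∈ P. Then a is a non-generator if and only if both: (i) a ≤ p for every p ∈ P that is maximal below ⊤, and (ii) for every e ∈ P with e < ⊤ such that there is no element maximal below ⊤ above e, there exists r ∈ P with r < ⊤, a ≤ r and e ≤ r. -/

import Mathlib

def NonGenerator {P : Type*} [PartialOrder P] [OrderTop P] (a : P) : Prop :=
  ∀ e : P, (¬ ∃ p : P, p < ⊤ ∧ a ≤ p ∧ e ≤ p) → e = ⊤

def MaximalBelowTop {P : Type*} [PartialOrder P] [OrderTop P] (p : P) : Prop :=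
  p < ⊤ ∧ ¬ ∃ q : P, p < q ∧ q < ⊤

section

variable {P : Type*} [PartialOrder P] [OrderTop P] {a p : P}

theorem maximalBelowTop_iff_isCoatom : MaximalBelowTop p ↔ IsCoatom p := by
  simp only [MaximalBelowTop, IsCoatom, lt_top_iff_ne_top, not_exists, not_and, not_not]

theorem nonGenerator_iff_forall_lt_top :
    NonGenerator a ↔ ∀ e < (⊤ : P), ∃ r < ⊤, a ≤ r ∧ e ≤ r :=
  forall_congr' fun _ ↦ not_imp_comm.trans (imp_congr_left lt_top_iff_ne_top.symm)

theorem NonGenerator.le_of_isCoatom (ha : NonGenerator a) (hp : IsCoatom p) : a ≤ p := by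
  obtain ⟨r, hr, har, hpr⟩ := nonGenerator_iff_forall_lt_top.mp ha p hp.lt_top
  exact har.trans_eq ((hp.le_iff_eq hr.ne).mp hpr)

end

theorem stmt_5 {P : Type*} [PartialOrder P] [OrderTop P] (a : P) :
    NonGenerator a ↔
      (∀ p : P, MaximalBelowTop p → a ≤ p) ∧
      (∀ e : P, e < ⊤ → (¬ ∃ p : P, MaximalBelowTop p ∧ e ≤ p) →
        ∃ r : P, r < ⊤ ∧ a ≤ r ∧ e ≤ r) := by
  simp only [maximalBelowTop_iff_isCoatom]
  constructor
  · intro ha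
    exact ⟨fun _ ↦ ha.le_of_isCoatom, fun e he _ ↦ nonGenerator_iff_forall_lt_top.mp ha e he⟩
  · rintro ⟨h_le_coatom, h_bound⟩
    refine nonGenerator_iff_forall_lt_top.mpr fun e he ↦ ?_
    by_cases h_below : ∃ p : P, IsCoatom p ∧ e ≤ p
    · obtain ⟨p, hp, hep⟩ := h_below
      exact ⟨p, hp.lt_top, h_le_coatom p hp, hep⟩
    · exact h_bound e he h_below
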